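/- Define q : ℝ¹⁰ → ℝ⁵ by q(x) = (2x₁x₂ − x₇² − x₈² + x₉² + x₁₀², √2x₅x₇ − √2x₅x₉ + √2x₆x₈ − √2x₆x₁₀ − 2x₂x₄, −√2x₅x₈ − √2x₅x₁₀ + √2x₆x₇ + √2x₆x₉ + 2x₂x₃, −√2x₃x₇ + √2x₃x₉ + √2x₄x₈ + √2x₄x₁₀ − 2x₁x₆, −√2x₃x₈ + √2x₃x₁₀ − √2x₄x₇ − √2x₄x₉ + 2x₁x₅), and for x ∈ ℝ¹⁰ let X(x) be the real skew-symmetric 5×5 matrix X(x) = x₁E₂₃ + x₂E₄₅ + x₃E₁₂ + x₄E₁₃ + x₅E₁₄ + x₆E₁₅ + (x₇/√2)(E₂₄ + E₃₅) + (x₈/√2)(E₂₅ − E₃₄) + (x₉/√2)(E₂₄ − E₃₅) + (x₁₀/√2)(E₂₅ + E₃₄), where E_{jk} denotes the skew-symmetric matrix with entry 1 in position (j,k), entry −1 in position (k,j), and 0 elsewhere. Then for every x ∈ ℝ¹⁰: q(x) = 0 if and only if the matrix X(x) has rank at most 2 (equivalently, if and only if the corresponding 2-form on ℝ⁵ is decomposable).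 -/

import Mathlib

/-!
Write `P i j k l = A i j * A k l - A i k * A j l + A i l * A j k` for the Pfaffian of the principal
`4 × 4` submatrix of a skew-symmetric matrix `A` on the indices `i, j, k, l`. Up to a factor `± 2`,
the five components of `q(x)` are exactly the five Pfaffians of `X(x)`, one for each omitted index.

If all Pfaffians vanish and `A i j ≠ 0`, the relation `P i j k l = 0` solved for `A k l` displays
`A` as a product of an `n × 2` and a `2 × n` matrix (`rank_le_two_of_pfaffian`). Conversely, the
determinant of a principal `4 × 4` submatrix is the square of its Pfaffian, so it vanishes only
if the Pfaffian does; and it vanishes when `A` has rank at most `2` (`pfaffian_of_rank_le_two`).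
-/

open Real

/-- The quadratic map `q : ℝ¹⁰ → ℝ⁵` (coordinates `x₁,…,x₁₀` of the statement
are `x 0, …, x 9` here). -/
noncomputable def qMap (x : Fin 10 → ℝ) : Fin 5 → ℝ :=
  ![2 * x 0 * x 1 - x 6 ^ 2 - x 7 ^ 2 + x 8 ^ 2 + x 9 ^ 2,
    √2 * x 4 * x 6 - √2 * x 4 * x 8 + √2 * x 5 * x 7 - √2 * x 5 * x 9
      - 2 * x 1 * x 3,
    -(√2) * x 4 * x 7 - √2 * x 4 * x 9 + √2 * x 5 * x 6 + √2 * x 5 * x 8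
      + 2 * x 1 * x 2,
    -(√2) * x 2 * x 6 + √2 * x 2 * x 8 + √2 * x 3 * x 7 + √2 * x 3 * x 9
      - 2 * x 0 * x 5,
    -(√2) * x 2 * x 7 + √2 * x 2 * x 9 - √2 * x 3 * x 6 - √2 * x 3 * x 8
      + 2 * x 0 * x 4]

/-- The elementary skew-symmetric matrix `E_{jk}`: entry `1` at `(j,k)`,
`-1` at `(k,j)`, `0` elsewhere.  (Indices here are 0-based, so the `E_{jk}`
of the statement is `Eskew (j-1) (k-1)`.) -/
def Eskew (j k : Fin 5) : Matrix (Fin 5) (Fin 5) ℝ :=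
  Matrix.of fun a b =>
    if a = j ∧ b = k then 1 else if a = k ∧ b = j then -1 else 0

/-- The skew-symmetric matrix `X(x) = x₁E₂₃ + x₂E₄₅ + x₃E₁₂ + x₄E₁₃ + x₅E₁₄
+ x₆E₁₅ + (x₇/√2)(E₂₄+E₃₅) + (x₈/√2)(E₂₅-E₃₄) + (x₉/√2)(E₂₄-E₃₅)
+ (x₁₀/√2)(E₂₅+E₃₄)`. -/
noncomputable def Xmat (x : Fin 10 → ℝ) : Matrix (Fin 5) (Fin 5) ℝ :=
  x 0 • Eskew 1 2 + x 1 • Eskew 3 4 + x 2 • Eskew 0 1 + x 3 • Eskew 0 2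
    + x 4 • Eskew 0 3 + x 5 • Eskew 0 4
    + (x 6 / √2) • (Eskew 1 3 + Eskew 2 4)
    + (x 7 / √2) • (Eskew 1 4 - Eskew 2 3)
    + (x 8 / √2) • (Eskew 1 3 - Eskew 2 4)
    + (x 9 / √2) • (Eskew 1 4 + Eskew 2 3)

/-- The Pfaffian of the principal submatrix of a skew-symmetric matrix on the indices
`i, j, k, l` (in this order, repetitions allowed). -/
def pfaffian {n : Type*} (A : Matrix n n ℝ) (i j k l : n) : ℝ :=
  A i j * A k l - A i k * A j l + A i l * A j k

theorem rank_le_two_of_pfaffian {n : Type*} [Fintype n] (A : Matrix n n ℝ)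
    (h : ∀ i j k l, pfaffian A i j k l = 0) : A.rank ≤ 2 := by
  by_cases hA : A = 0
  · simp [hA]
  · obtain ⟨i, j, hij⟩ : ∃ i j, A i j ≠ 0 := by
      by_contra! hc
      exact hA (Matrix.ext hc)
    have hprod : A = (Matrix.of fun k => ![A i k / A i j, -(A j k / A i j)])
        * (Matrix.of ![fun l => A j l, fun l => A i l]) := by
      ext k l
      have hP := h i j k l
      simp only [pfaffian] at hP
      simp [Matrix.mul_apply, Fin.sum_univ_two]
      field_simp
      linarith
    rw [hprod]
    exact (Matrix.rank_mul_le_left _ _).trans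
      ((Matrix.rank_le_card_width _).trans_eq (Fintype.card_fin 2))

theorem det_skew_four (a b c d e f : ℝ) :
    (!![0, a, b, c; -a, 0, d, e; -b, -d, 0, f; -c, -e, -f, 0]).det
      = (a * f - b * e + c * d) ^ 2 := by
  simp [Matrix.det_succ_row_zero, Fin.sum_univ_succ, Fin.succAbove]
  ring

theorem pfaffian_of_rank_le_two {n : Type*} [Fintype n] (A : Matrix n n ℝ)
    (hskew : ∀ i j, A j i = -A i j) (hA : A.rank ≤ 2) (i j k l : n) :
    pfaffian A i j k l = 0 := by
  have hdiag : ∀ i, A i i = 0 := fun i => by linarith [hskew i i]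
  have hrank : (A.submatrix ![i, j, k, l] ![i, j, k, l]).rank ≤ 2 :=
    (Matrix.rank_submatrix_le A _ _).trans hA
  have hdet : (A.submatrix ![i, j, k, l] ![i, j, k, l]).det = 0 := by
    by_contra hne
    have := Matrix.rank_of_isUnit _ ((Matrix.isUnit_iff_isUnit_det _).2 (Ne.isUnit hne))
    rw [Fintype.card_fin] at this
    omega
  have hsq : (A.submatrix ![i, j, k, l] ![i, j, k, l]).det = pfaffian A i j k l ^ 2 := by
    rw [pfaffian, ← det_skew_four]
    congr 1
    ext r s
    fin_cases r <;> fin_cases s <;> simp [hdiag, hskew i j, hskew i k, hskew i l, hskew j k,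
      hskew j l, hskew k l]
  exact pow_eq_zero_iff two_ne_zero |>.1 (hsq ▸ hdet)

/-- The Pfaffian is alternating in its four indices, so in dimension five all Pfaffians vanish as
soon as the five with increasing indices do. -/
theorem pfaffian_eq_zero_of_five (A : Matrix (Fin 5) (Fin 5) ℝ)
    (hskew : ∀ i j, A j i = -A i j)
    (h0 : pfaffian A 1 2 3 4 = 0) (h1 : pfaffian A 0 2 3 4 = 0) (h2 : pfaffian A 0 1 3 4 = 0)
    (h3 : pfaffian A 0 1 2 4 = 0) (h4 : pfaffian A 0 1 2 3 = 0) (i j k l : Fin 5) :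
    pfaffian A i j k l = 0 := by
  have swap12 : ∀ i j k l, pfaffian A j i k l = -pfaffian A i j k l := fun i j k l => by
    simp only [pfaffian, hskew i j]
    ring
  have swap23 : ∀ i j k l, pfaffian A i k j l = -pfaffian A i j k l := fun i j k l => by
    simp only [pfaffian, hskew j k]
    ring
  have swap34 : ∀ i j k l, pfaffian A i j l k = -pfaffian A i j k l := fun i j k l => by
    simp only [pfaffian, hskew k l]
    ring
  have eq12 : ∀ i k l, pfaffian A i i k l = 0 := fun i k l => by linarith [swap12 i i k l]
  have eq23 : ∀ i j l, pfaffian A i j j l = 0 := fun i j l => by linarith [swap23 i j j l]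
  have eq34 : ∀ i j k, pfaffian A i j k k = 0 := fun i j k => by linarith [swap34 i j k k]
  have sorted4 : ∀ i j k l : Fin 5, i < j → j < k → k < l → pfaffian A i j k l = 0 := by
    intro i j k l hij hjk hkl
    have hcases : (i = 1 ∧ j = 2 ∧ k = 3 ∧ l = 4) ∨ (i = 0 ∧ j = 2 ∧ k = 3 ∧ l = 4) ∨
        (i = 0 ∧ j = 1 ∧ k = 3 ∧ l = 4) ∨ (i = 0 ∧ j = 1 ∧ k = 2 ∧ l = 4) ∨
        (i = 0 ∧ j = 1 ∧ k = 2 ∧ l = 3) := by omega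
    rcases hcases with ⟨rfl, rfl, rfl, rfl⟩ | ⟨rfl, rfl, rfl, rfl⟩ | ⟨rfl, rfl, rfl, rfl⟩ |
      ⟨rfl, rfl, rfl, rfl⟩ | ⟨rfl, rfl, rfl, rfl⟩ <;> assumption
  -- The remaining index lists are sorted by insertion, one index at a time.
  have sorted3 : ∀ i j k l : Fin 5, i < j → j < k → pfaffian A i j k l = 0 := by
    intro i j k l hij hjk
    rcases lt_trichotomy k l with h | rfl | h
    · exact sorted4 i j k l hij hjk h
    · exact eq34 i j k
    rw [swap34, neg_eq_zero]
    rcases lt_trichotomy j l with h' | rfl | h'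
    · exact sorted4 i j l k hij h' h
    · exact eq23 i j k
    rw [swap23, neg_eq_zero]
    rcases lt_trichotomy i l with h'' | rfl | h''
    · exact sorted4 i l j k h'' h' hjk
    · exact eq12 i j k
    rw [swap12, neg_eq_zero]
    exact sorted4 l i j k h'' hij hjk
  have sorted2 : ∀ i j k l : Fin 5, i < j → pfaffian A i j k l = 0 := by
    intro i j k l hij
    rcases lt_trichotomy j k with h | rfl | h
    · exact sorted3 i j k l hij h
    · exact eq23 i j l
    rw [swap23, neg_eq_zero]
    rcases lt_trichotomy i k with h' | rfl | h'
    · exact sorted3 i k j l h' h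
    · exact eq12 i j l
    rw [swap12, neg_eq_zero]
    exact sorted3 k i j l h' hij
  rcases lt_trichotomy i j with h | rfl | h
  · exact sorted2 i j k l h
  · exact eq12 i k l
  · rw [swap12, neg_eq_zero]
    exact sorted2 j i k l h

theorem Xmat_skew (x : Fin 10 → ℝ) (i j : Fin 5) : Xmat x j i = -Xmat x i j := by
  have hE : ∀ a b : Fin 5, a ≠ b → Eskew a b j i = -Eskew a b i j := by
    intro a b hab
    simp only [Eskew, Matrix.of_apply]
    grind
  simp only [Xmat, Matrix.add_apply, Matrix.sub_apply, Matrix.smul_apply, smul_eq_mul]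
  simp only [hE 1 2 (by decide), hE 3 4 (by decide), hE 0 1 (by decide), hE 0 2 (by decide),
    hE 0 3 (by decide), hE 0 4 (by decide), hE 1 3 (by decide), hE 2 4 (by decide),
    hE 1 4 (by decide), hE 2 3 (by decide)]
  ring

theorem qMap_eq_pfaffian (x : Fin 10 → ℝ) :
    qMap x = ![2 * pfaffian (Xmat x) 1 2 3 4, -2 * pfaffian (Xmat x) 0 2 3 4,
      2 * pfaffian (Xmat x) 0 1 3 4, -2 * pfaffian (Xmat x) 0 1 2 4,
      2 * pfaffian (Xmat x) 0 1 2 3] := by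
  have hs : √2 ^ 2 = 2 := Real.sq_sqrt (by norm_num)
  have hdiv : ∀ y : ℝ, y / √2 = y * √2 / 2 := fun y => by
    rw [div_eq_div_iff (by positivity) (by norm_num)]
    linear_combination -y * hs
  ext m
  fin_cases m <;> simp [qMap, pfaffian, Xmat, Eskew, hdiv] <;> ring_nf <;>
    (try rw [hs]) <;> ring

/-- for every `x ∈ ℝ¹⁰`, `q(x) = 0` if and only if the
skew-symmetric matrix `X(x)` has rank at most `2`. -/
theorem stmt19 (x : Fin 10 → ℝ) :
    qMap x = 0 ↔ (Xmat x).rank ≤ 2 := by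
  rw [qMap_eq_pfaffian]
  constructor
  · intro h
    have h0 := congrFun h 0
    have h1 := congrFun h 1
    have h2 := congrFun h 2
    have h3 := congrFun h 3
    have h4 := congrFun h 4
    simp at h0 h1 h2 h3 h4
    exact rank_le_two_of_pfaffian _
      (pfaffian_eq_zero_of_five _ (Xmat_skew x) h0 h1 h2 h3 h4)
  · intro h
    simp [pfaffian_of_rank_le_two _ (Xmat_skew x) h]
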